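/- Let D = {t ∈ ℂ : |t| < R} with 0 < R ≤ ∞, let Ω ⊆ ℂᵏ be a nonempty connected open set, and let f be holomorphic on (D∖{0}) × Ω. Suppose there exist a nonempty open subset V ⊆ Ω and a holomorphic function F₀ on D × V with F₀ = f on (D∖{0}) × V. Then there exists a holomorphic function F on D × Ω with F = f on (D∖{0}) × Ω. -/

import Mathlib

open scoped ENNReal

/-!
Choose `r` with `|t| ≤ r` inside `D`. The Cauchy integral of `f` in `t` over the circle `|t| = r` is
holomorphic in the pair `(t, w)` for `|t| < r` and `w ∈ Ω`, since the circle stays away from the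
singularity. Where the slice `f (·, w)` is bounded near `0`, the removable singularity theorem and
Cauchy's formula identify this integral with `f (t, w)` for `t ≠ 0`. This holds for `w ∈ V`, hence,
for each fixed `t ≠ 0`, for all `w` in the connected set `Ω` by the identity theorem in `w`. So the
Cauchy integral extends `f` across `t = 0`.

That an integral over a compact set depends analytically on a parameter, in the sense of power
series on an arbitrary normed space, follows by integrating the Taylor series of the slices
coefficient by coefficient, which is legitimate because their coefficients satisfy uniform geometric
bounds near each point of the compact set.
-/

open Complex Filter Function MeasureTheory Metric Set Topology
open scoped NNReal Real

section PowerSeries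

variable {𝕜 A E F : Type*} [NontriviallyNormedField 𝕜] [NormedAddCommGroup A] [NormedSpace 𝕜 A]
  [NormedAddCommGroup E] [NormedSpace 𝕜 E] [NormedAddCommGroup F] [NormedSpace 𝕜 F]

theorem exists_norm_changeOrigin_mul_pow_le (p : FormalMultilinearSeries 𝕜 E F) {r r' : ℝ≥0}
    (hr : (r + r' : ℝ≥0∞) < p.radius) :
    ∃ C : ℝ, ∀ x : E, ‖x‖₊ ≤ r → ∀ n, ‖p.changeOrigin x n‖ * (r' : ℝ) ^ n ≤ C := by
  have hsum := p.changeOriginSeries_summable_aux₁ hr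
  set g : (Σ k l : ℕ, {s : Finset (Fin (k + l)) // s.card = l}) → ℝ≥0 :=
    fun s => ‖p (s.1 + s.2.1)‖₊ * r ^ s.2.1 * r' ^ s.1
  refine ⟨(∑' s, g s : ℝ≥0), fun x hx n => ?_⟩
  have hrp : (r : ℝ≥0∞) < p.radius := (le_add_right le_rfl).trans_lt hr
  have hxp : (‖x‖₊ : ℝ≥0∞) < p.radius := (ENNReal.coe_le_coe.2 hx).trans_lt hrp
  suffices h : ‖p.changeOrigin x n‖₊ * r' ^ n ≤ ∑' s, g s by exact_mod_cast h
  calc ‖p.changeOrigin x n‖₊ * r' ^ n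
      ≤ (∑' s : Σ l : ℕ, {s : Finset (Fin (n + l)) // s.card = l},
          ‖p (n + s.1)‖₊ * r ^ s.1) * r' ^ n := by
        gcongr
        refine (p.nnnorm_changeOrigin_le n hxp).trans ?_
        exact (p.changeOriginSeries_summable_aux₂ hxp n).tsum_le_tsum (fun s => by gcongr)
          (p.changeOriginSeries_summable_aux₂ hrp n)
    _ = ∑' s, g ⟨n, s⟩ := (NNReal.tsum_mul_right _ _).symm
    _ ≤ ∑' s, g s := NNReal.tsum_comp_le_tsum_of_inj hsum sigma_mk_injective

/-- If `p` is a power series at `(a₀, y₀)` of a function `f` on `A × E`, then `sliceSeries p a` is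
the Taylor series at `y₀` of the slice `y ↦ f (a₀ + a, y)`. -/
noncomputable def sliceSeries (p : FormalMultilinearSeries 𝕜 (A × E) F) (a : A) :
    FormalMultilinearSeries 𝕜 E F :=
  (p.changeOrigin (a, 0)).compContinuousLinearMap (.inr 𝕜 A E)

theorem norm_sliceSeries_le (p : FormalMultilinearSeries 𝕜 (A × E) F) (a : A) (n : ℕ) :
    ‖sliceSeries p a n‖ ≤ ‖p.changeOrigin (a, 0) n‖ :=
  (FormalMultilinearSeries.norm_compContinuousLinearMap_le _ _ n).trans <|
    mul_le_of_le_one_right (norm_nonneg _) <|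
      pow_le_one₀ (norm_nonneg _) (ContinuousLinearMap.norm_inr_le_one 𝕜 A E)

theorem continuousAt_sliceSeries [CompleteSpace F] (p : FormalMultilinearSeries 𝕜 (A × E) F)
    {a : A} (ha : ‖a‖ₑ < p.radius) (n : ℕ) : ContinuousAt (sliceSeries p · n) a := by
  have horigin : ContinuousAt (p.changeOrigin · n) ((a, 0) : A × E) :=
    ((p.hasFPowerSeriesOnBall_changeOrigin n (pos_of_gt ha)).analyticAt_of_mem
      (by simpa [enorm_eq_nnnorm, Prod.nnnorm_mk] using ha)).continuousAt
  exact (ContinuousMultilinearMap.compContinuousLinearMapL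
    fun _ : Fin n => ContinuousLinearMap.inr 𝕜 A E).continuous.continuousAt.comp
      (horigin.comp (f := fun a : A => (a, (0 : E))) (by fun_prop))

theorem hasFPowerSeriesOnBall_sliceSeries [CompleteSpace F] {f : A × E → F}
    {p : FormalMultilinearSeries 𝕜 (A × E) F} {a₀ a : A} {y₀ : E} {r : ℝ≥0∞}
    (hf : HasFPowerSeriesOnBall f p (a₀, y₀) r) (ha : ‖a‖ₑ < r) :
    HasFPowerSeriesOnBall (fun y => f (a₀ + a, y)) (sliceSeries p a) y₀ (r - ‖a‖ₑ) := by
  have hmoved : HasFPowerSeriesOnBall f (p.changeOrigin (a, 0)) (a₀ + a, y₀) (r - ‖a‖ₑ) := by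
    simpa [enorm_eq_nnnorm, Prod.nnnorm_mk] using
      hf.changeOrigin (y := ((a, 0) : A × E)) (by simpa [enorm_eq_nnnorm, Prod.nnnorm_mk] using ha)
  refine ⟨?_, hmoved.r_pos, fun {y} hy => ?_⟩
  · refine ENNReal.le_of_forall_nnreal_lt fun ρ hρ => ?_
    obtain ⟨C, -, hC⟩ :=
      (p.changeOrigin ((a, 0) : A × E)).norm_mul_pow_le_of_lt_radius (hρ.trans_le hmoved.r_le)
    exact FormalMultilinearSeries.le_radius_of_bound _ C fun n =>
      (mul_le_mul_of_nonneg_right (norm_sliceSeries_le p a n) (by positivity)).trans (hC n)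
  · simpa [sliceSeries, Function.comp_def] using
      hmoved.hasSum (y := ((0, y) : A × E)) (by simpa [enorm_eq_nnnorm, Prod.nnnorm_mk] using hy)

end PowerSeries

section Integral

variable {𝕜 X A E F : Type*} [RCLike 𝕜] [NormedAddCommGroup A] [NormedSpace 𝕜 A]
  [NormedAddCommGroup E] [NormedSpace 𝕜 E] [NormedAddCommGroup F] [NormedSpace 𝕜 F]
  [MeasurableSpace X]

section Integrable

variable [TopologicalSpace X] [OpensMeasurableSpace X] [T2Space X] [CompleteSpace F]
  {μ : Measure X} {f : A × E → F} {γ : X → A} {y₀ : E}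

theorem eventually_integrableOn_of_analyticAt [IsFiniteMeasureOnCompacts μ] {K : Set X}
    (hK : IsCompact K) (hγ : Continuous γ) (hf : ∀ x ∈ K, AnalyticAt 𝕜 f (γ x, y₀)) :
    ∀ᶠ y in 𝓝 y₀, IntegrableOn (fun x => f (γ x, y)) K μ := by
  have hanalytic : ∀ᶠ y in 𝓝 y₀, ∀ x ∈ K, AnalyticAt 𝕜 f (γ x, y) :=
    hK.eventually_forall_of_forall_eventually fun x hx =>
      (by fun_prop : Continuous fun z : E × X => (γ z.2, z.1)).continuousAt.eventually
        (hf x hx).eventually_analyticAt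
  filter_upwards [hanalytic] with y hy
  exact ContinuousOn.integrableOn_compact hK fun x hx =>
    ((hy x hx).continuousAt.comp (f := fun x => (γ x, y)) (by fun_prop)).continuousWithinAt

end Integrable

variable [NormedSpace ℝ F]

theorem hasFPowerSeriesOnBall_integral {μ : Measure X} [IsFiniteMeasure μ] {f : X → E → F}
    {q : X → FormalMultilinearSeries 𝕜 E F} {x₀ : E} {r : ℝ≥0} {C : ℝ} (hr : 0 < r)
    (hf : ∀ᵐ a ∂μ, HasFPowerSeriesOnBall (f a) (q a) x₀ r)
    (hq : ∀ n, AEStronglyMeasurable (q · n) μ)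
    (hC : ∀ n, ∀ᵐ a ∂μ, ‖q a n‖ * (r : ℝ) ^ n ≤ C) :
    HasFPowerSeriesOnBall (fun x => ∫ a, f a x ∂μ) (fun n => ∫ a, q a n ∂μ) x₀ r := by
  have hr' : (0 : ℝ) < r := hr
  have hqC : ∀ n, ∀ᵐ a ∂μ, ‖q a n‖ ≤ C / (r : ℝ) ^ n := fun n => by
    filter_upwards [hC n] with a ha
    exact (le_div_iff₀ (by positivity)).2 ha
  have hqi : ∀ n, Integrable (q · n) μ := fun n => .of_bound (hq n) _ (hqC n)
  refine ⟨FormalMultilinearSeries.le_radius_of_bound _ (C * μ.real univ) fun n => ?_,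
    by exact_mod_cast hr, fun {y} hy => ?_⟩
  · calc ‖∫ a, q a n ∂μ‖ * (r : ℝ) ^ n
        ≤ C / (r : ℝ) ^ n * μ.real univ * (r : ℝ) ^ n := by
          gcongr
          exact norm_integral_le_of_norm_le_const (hqC n)
      _ = C * μ.real univ := by field_simp
  · simp only [ContinuousMultilinearMap.integral_apply (hqi _)]
    have hyr : ‖y‖ / r < 1 := (div_lt_one hr').2 (by simpa using hy)
    have hgeom : Summable fun n => C * (‖y‖ / r) ^ n :=
      (summable_geometric_of_lt_one (by positivity) hyr).mul_left C
    refine hasSum_integral_of_dominated_convergence (fun n _ => C * (‖y‖ / r) ^ n)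
      (fun n => ((ContinuousMultilinearMap.apply 𝕜 (fun _ => E) F fun _ => y).integrable_comp
        (hqi n)).aestronglyMeasurable) (fun n => ?_) (.of_forall fun _ => hgeom)
      (integrable_const _) (hf.mono fun a ha => ha.hasSum hy)
    filter_upwards [hqC n] with a ha
    calc ‖q a n fun _ => y‖ ≤ ‖q a n‖ * ‖y‖ ^ n := by simpa using (q a n).le_opNorm fun _ => y
      _ ≤ C / (r : ℝ) ^ n * ‖y‖ ^ n := by gcongr
      _ = C * (‖y‖ / r) ^ n := by rw [div_pow]; ring

variable [TopologicalSpace X] [SecondCountableTopology X] [BorelSpace X] [CompleteSpace F]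
  {μ : Measure X} {f : A × E → F} {γ : X → A} {y₀ : E}

theorem exists_isOpen_analyticAt_setIntegral {x₀ : X} (hγ : Continuous γ)
    (hf : AnalyticAt 𝕜 f (γ x₀, y₀)) :
    ∃ t, IsOpen t ∧ x₀ ∈ t ∧ ∀ u ⊆ t, MeasurableSet u → μ u ≠ ∞ →
      AnalyticAt 𝕜 (fun y => ∫ x in u, f (γ x, y) ∂μ) y₀ := by
  obtain ⟨p, R, hp⟩ := hf
  obtain ⟨ρ, hρ0, hρR⟩ : ∃ ρ : ℝ≥0, 0 < ρ ∧ (ρ + ρ : ℝ≥0∞) < R := by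
    obtain ⟨ρ, hρ0, hρR⟩ := ENNReal.lt_iff_exists_nnreal_btwn.1 hp.r_pos
    refine ⟨ρ / 2, half_pos (by exact_mod_cast hρ0), ?_⟩
    rwa [← ENNReal.coe_add, add_halves]
  obtain ⟨C, hC⟩ := exists_norm_changeOrigin_mul_pow_le p (hρR.trans_le hp.r_le)
  refine ⟨{x | ‖γ x - γ x₀‖₊ < ρ}, isOpen_lt (by fun_prop) continuous_const, by simpa using hρ0,
    fun u hut hu hμu => ?_⟩
  have : IsFiniteMeasure (μ.restrict u) := isFiniteMeasure_restrict.2 hμu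
  have hnear : ∀ x ∈ u, ‖γ x - γ x₀‖ₑ < ρ := fun x hx => ENNReal.coe_lt_coe.2 (hut hx)
  have hslice : ∀ x ∈ u, HasFPowerSeriesOnBall (fun y => f (γ x, y))
      (sliceSeries p (γ x - γ x₀)) y₀ ρ := fun x hx => by
    have hxR := (ENNReal.add_lt_add_right ENNReal.coe_ne_top (hnear x hx)).trans hρR
    simpa using (hasFPowerSeriesOnBall_sliceSeries hp ((le_add_right le_rfl).trans_lt hxR)).mono
      (by exact_mod_cast hρ0) (lt_tsub_iff_left.2 hxR).le
  have hmeas : ∀ n,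
      AEStronglyMeasurable (fun x => sliceSeries p (γ x - γ x₀) n) (μ.restrict u) := by
    refine fun n => ContinuousOn.aestronglyMeasurable (fun x hx => ?_) hu
    have hxp : ‖γ x - γ x₀‖ₑ < p.radius :=
      ((hnear x hx).trans ((le_add_right le_rfl).trans_lt hρR)).trans_le hp.r_le
    exact ((continuousAt_sliceSeries p hxp n).comp
      (f := fun x => γ x - γ x₀) (by fun_prop)).continuousWithinAt
  refine (hasFPowerSeriesOnBall_integral (C := C) hρ0 (ae_restrict_of_forall_mem hu hslice) hmeas
    fun n => ae_restrict_of_forall_mem hu fun x hx => ?_).analyticAt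
  refine le_trans ?_ (hC (γ x - γ x₀, 0) ?_ n)
  · gcongr
    exact norm_sliceSeries_le p _ n
  · simpa [Prod.nnnorm_mk] using (hut hx).le

theorem analyticAt_setIntegral [IsFiniteMeasureOnCompacts μ] [T2Space X] {K : Set X}
    (hK : IsCompact K) (hγ : Continuous γ) (hf : ∀ x ∈ K, AnalyticAt 𝕜 f (γ x, y₀)) :
    AnalyticAt 𝕜 (fun y => ∫ x in K, f (γ x, y) ∂μ) y₀ := by
  -- Allowing every measurable `u ⊆ t` makes it possible to take disjoint pieces of a union.
  let IntegralsAnalyticNear (s : Set X) : Prop := ∃ t ⊇ s, MeasurableSet t ∧ ∀ u ⊆ t, u ⊆ K →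
    MeasurableSet u → AnalyticAt 𝕜 (fun y => ∫ x in u, f (γ x, y) ∂μ) y₀
  suffices h : IntegralsAnalyticNear K by
    obtain ⟨t, hKt, -, ht⟩ := h
    exact ht K hKt subset_rfl hK.measurableSet
  refine hK.induction_on (p := IntegralsAnalyticNear) ?_ ?_ ?_ ?_
  · refine ⟨∅, subset_rfl, .empty, fun u hu _ _ => ?_⟩
    simpa [subset_empty_iff.1 hu] using analyticAt_const
  · rintro s s' hss' ⟨t, hs't, ht⟩
    exact ⟨t, hss'.trans hs't, ht⟩
  · rintro s₁ s₂ ⟨t₁, hst₁, hm₁, h₁⟩ ⟨t₂, hst₂, hm₂, h₂⟩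
    refine ⟨t₁ ∪ t₂, union_subset_union hst₁ hst₂, hm₁.union hm₂, fun u hut huK hu => ?_⟩
    refine ((h₁ (u ∩ t₁) inter_subset_right (inter_subset_left.trans huK) (hu.inter hm₁)).add
      (h₂ (u \ t₁) (sdiff_subset_iff.2 hut) (sdiff_subset.trans huK) (hu.diff hm₁))).congr ?_
    filter_upwards [eventually_integrableOn_of_analyticAt (μ := μ) hK hγ hf] with y hy
    exact integral_inter_add_sdiff hm₁ (hy.mono_set huK)
  · intro x hx
    obtain ⟨t, hto, hxt, ht⟩ := exists_isOpen_analyticAt_setIntegral (μ := μ) hγ (hf x hx)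
    exact ⟨t, mem_nhdsWithin_of_mem_nhds (hto.mem_nhds hxt), t, subset_rfl, hto.measurableSet,
      fun u hut huK hu => ht u hut hu ((measure_mono huK).trans_lt hK.measure_lt_top).ne⟩

end Integral

section Cauchy

variable {E F : Type*} [NormedAddCommGroup E] [NormedSpace ℂ E] [NormedAddCommGroup F]
  [NormedSpace ℂ F] [CompleteSpace F] {f : ℂ × E → F} {c : ℂ} {r : ℝ}

theorem analyticAt_circleIntegral {y₀ : E} (hf : ∀ z ∈ sphere c |r|, AnalyticAt ℂ f (z, y₀)) :
    AnalyticAt ℂ (fun y => ∮ z in C(c, r), f (z, y)) y₀ := by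
  have hint : AnalyticAt ℂ (fun y => ∫ θ in Icc 0 (2 * π),
      ((circleMap c r θ - c) * I) • f (circleMap c r θ, y)) y₀ :=
    analyticAt_setIntegral (f := fun p : ℂ × E => ((p.1 - c) * I) • f p) isCompact_Icc
      (continuous_circleMap c r) fun θ _ =>
        ((analyticAt_fst.sub analyticAt_const).mul analyticAt_const).smul
          (hf _ (circleMap_mem_sphere' c r θ))
  refine hint.congr (.of_forall fun y => ?_)
  simp only [circleIntegral, deriv_circleMap, circleMap_sub_center,
    intervalIntegral.integral_of_le Real.two_pi_pos.le, integral_Icc_eq_integral_Ioc]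

theorem two_pi_i_inv_smul_circleIntegral_sub_inv_smul_of_isBoundedUnder {g : ℂ → F} {t : ℂ}
    (ht : t ∈ ball c r) (htc : t ≠ c) (hg : DifferentiableOn ℂ g (closedBall c r \ {c}))
    (hbdd : IsBoundedUnder (· ≤ ·) (𝓝[≠] c) fun z => ‖g z‖) :
    (2 * π * I : ℂ)⁻¹ • ∮ z in C(c, r), (z - t)⁻¹ • g z = g t := by
  have hr : 0 < r := dist_nonneg.trans_lt ht
  let G : ℂ → F := update g c (limUnder (𝓝[≠] c) g)
  have hGg : ∀ z ≠ c, G z = g z := fun z hz => update_of_ne hz _ _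
  have hG : DifferentiableOn ℂ G (closedBall c r) := by
    refine differentiableOn_update_limUnder_of_isLittleO (closedBall_mem_nhds c hr) hg ?_
    have hconst : IsBoundedUnder (· ≤ ·) (𝓝[≠] c) (norm ∘ fun _ : ℂ => g c) :=
      isBoundedUnder_const
    exact (IsBoundedUnder.isLittleO_sub_self_inv hbdd).sub hconst.isLittleO_sub_self_inv
  calc (2 * π * I : ℂ)⁻¹ • ∮ z in C(c, r), (z - t)⁻¹ • g z
      = (2 * π * I : ℂ)⁻¹ • ∮ z in C(c, r), (z - t)⁻¹ • G z := by
        congr 1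
        refine circleIntegral.integral_congr hr.le fun z hz => ?_
        simp only [hGg z (ne_of_mem_sphere hz hr.ne')]
    _ = G t := (hG.diffContOnCl_ball subset_rfl).two_pi_i_inv_smul_circleIntegral_sub_inv_smul ht
    _ = g t := hGg t htc

/-- The Cauchy integral over the circle `|z - c| = r` in the first variable of `f`, as a function
of the first variable and of the parameter. It is the candidate for the holomorphic extension of
`f` across `t = c`. -/
noncomputable def cauchyTransform (f : ℂ × E → F) (c : ℂ) (r : ℝ) (p : ℂ × E) : F :=
  (2 * π * I : ℂ)⁻¹ • ∮ z in C(c, r), (z - p.1)⁻¹ • f (z, p.2)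

theorem analyticAt_cauchyTransform {p : ℂ × E} (hp : p.1 ∈ ball c r)
    (hf : ∀ z ∈ sphere c r, AnalyticAt ℂ f (z, p.2)) :
    AnalyticAt ℂ (cauchyTransform f c r) p := by
  have hr : 0 < r := dist_nonneg.trans_lt hp
  refine AnalyticAt.fun_const_smul (analyticAt_circleIntegral
    (f := fun q : ℂ × ℂ × E => (q.1 - q.2.1)⁻¹ • f (q.1, q.2.2)) fun z hz => ?_)
  rw [abs_of_pos hr] at hz
  have hzp : z - p.1 ≠ 0 := sub_ne_zero.2 (sphere_disjoint_ball.ne_of_mem hz hp)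
  have hkernel : AnalyticAt ℂ (fun q : ℂ × ℂ × E => (q.1 - q.2.1)⁻¹) (z, p) :=
    (analyticAt_fst.sub (analyticAt_fst.comp analyticAt_snd)).fun_inv hzp
  exact hkernel.fun_smul ((hf z hz).fun_comp (f := fun q : ℂ × ℂ × E => (q.1, q.2.2))
    (analyticAt_fst.prod (analyticAt_snd.comp analyticAt_snd)))

theorem eqOn_cauchyTransform {D : Set ℂ} {Ω : Set E} (hrD : closedBall c r ⊆ D)
    (hΩ : IsPreconnected Ω) (hf : AnalyticOnNhd ℂ f ((D \ {c}) ×ˢ Ω)) {v : E} (hΩv : Ω ∈ 𝓝 v)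
    (hbdd : ∀ᶠ w in 𝓝 v, IsBoundedUnder (· ≤ ·) (𝓝[≠] c) fun z => ‖f (z, w)‖) :
    EqOn (cauchyTransform f c r) f ((ball c r \ {c}) ×ˢ Ω) := by
  rintro ⟨t, w⟩ ⟨⟨ht, htc⟩, hw⟩
  have hr : 0 < r := dist_nonneg.trans_lt ht
  have hpunctured : closedBall c r \ {c} ⊆ D \ {c} := sdiff_subset_sdiff_left hrD
  have hslice : ∀ z ∈ closedBall c r \ {c}, ∀ y ∈ Ω, AnalyticAt ℂ f (z, y) :=
    fun z hz y hy => hf _ ⟨hpunctured hz, hy⟩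
  have hcauchy : AnalyticOnNhd ℂ (fun y => cauchyTransform f c r (t, y)) Ω := fun y hy =>
    (analyticAt_cauchyTransform (p := (t, y)) ht fun z hz =>
      hslice z ⟨sphere_subset_closedBall hz, ne_of_mem_sphere hz hr.ne'⟩ y hy).along_snd
  have hft : AnalyticOnNhd ℂ (fun y => f (t, y)) Ω := fun y hy =>
    (hslice t ⟨ball_subset_closedBall ht, htc⟩ y hy).along_snd
  refine hcauchy.eqOn_of_preconnected_of_eventuallyEq hft hΩ (mem_of_mem_nhds hΩv) ?_ hw
  filter_upwards [hbdd, hΩv] with y hy hyΩ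
  exact two_pi_i_inv_smul_circleIntegral_sub_inv_smul_of_isBoundedUnder ht htc
    (fun z hz => (hslice z hz y hyΩ).along_fst.differentiableAt.differentiableWithinAt) hy

theorem analyticOnNhd_ite_cauchyTransform {D : Set ℂ} {Ω : Set E} (hr : 0 < r)
    (hrD : closedBall c r ⊆ D) (hΩ : IsOpen Ω) (hf : AnalyticOnNhd ℂ f ((D \ {c}) ×ˢ Ω))
    (heq : EqOn (cauchyTransform f c r) f ((ball c r \ {c}) ×ˢ Ω)) :
    AnalyticOnNhd ℂ (fun p => if p.1 = c then cauchyTransform f c r p else f p) (D ×ˢ Ω) := by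
  rintro ⟨t, w⟩ ⟨ht, hw⟩
  by_cases htc : t = c
  · subst htc
    have hcauchy : AnalyticAt ℂ (cauchyTransform f t r) (t, w) :=
      analyticAt_cauchyTransform (mem_ball_self hr) fun z hz =>
        hf _ ⟨⟨hrD (sphere_subset_closedBall hz), ne_of_mem_sphere hz hr.ne'⟩, hw⟩
    refine hcauchy.congr ?_
    filter_upwards [prod_mem_nhds (ball_mem_nhds t hr) (hΩ.mem_nhds hw)] with p hp
    split_ifs with hpt
    · rfl
    · exact heq ⟨⟨hp.1, hpt⟩, hp.2⟩
  · have hne : ∀ᶠ p : ℂ × E in 𝓝 (t, w), p.1 ≠ c := continuousAt_fst.eventually_ne htc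
    exact (hf _ ⟨⟨ht, htc⟩, hw⟩).congr (hne.mono fun p hp => (if_neg hp).symm)

end Cauchy

theorem isBoundedUnder_norm_of_continuousAt_of_eqOn {X F : Type*} [TopologicalSpace X]
    [SeminormedAddCommGroup F] {g h : X → F} {s : Set X} {c : X} (hs : s ∈ 𝓝 c)
    (hh : ContinuousAt h c) (heq : EqOn h g (s \ {c})) :
    IsBoundedUnder (· ≤ ·) (𝓝[≠] c) fun x => ‖g x‖ :=
  (hh.norm.tendsto.mono_left nhdsWithin_le_nhds).isBoundedUnder_le.mono_le <| by
    filter_upwards [sdiff_mem_nhdsWithin_compl hs {c}] with x hx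
    exact (congrArg norm (heq hx)).ge

theorem stmt_10_general {E F : Type*} [NormedAddCommGroup E] [NormedSpace ℂ E]
    [NormedAddCommGroup F] [NormedSpace ℂ F] [CompleteSpace F] {f : ℂ × E → F} {D : Set ℂ}
    {c : ℂ} {Ω : Set E} {v : E} (hD : D ∈ 𝓝 c) (hΩo : IsOpen Ω) (hΩc : IsPreconnected Ω)
    (hf : AnalyticOnNhd ℂ f ((D \ {c}) ×ˢ Ω)) (hv : v ∈ Ω)
    (hbdd : ∀ᶠ w in 𝓝 v, IsBoundedUnder (· ≤ ·) (𝓝[≠] c) fun z => ‖f (z, w)‖) :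
    ∃ F : ℂ × E → F, AnalyticOnNhd ℂ F (D ×ˢ Ω) ∧ EqOn F f ((D \ {c}) ×ˢ Ω) := by
  obtain ⟨r, hr, hrD⟩ := nhds_basis_closedBall.mem_iff.1 hD
  have heq := eqOn_cauchyTransform hrD hΩc hf (hΩo.mem_nhds hv) hbdd
  exact ⟨_, analyticOnNhd_ite_cauchyTransform hr hrD hΩo hf heq, fun p hp => if_neg hp.1.2⟩

/-- if a holomorphic function on (D∖{0}) × Ω extends holomorphically across
{0} × V for some nonempty open V ⊆ Ω, then it extends holomorphically to all of D × Ω. -/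
theorem stmt_10 (k : ℕ) (R : ℝ≥0∞) (hR : 0 < R)
    (D : Set ℂ) (hD : D = {t : ℂ | (‖t‖₊ : ℝ≥0∞) < R})
    (Ω : Set (Fin k → ℂ)) (hΩo : IsOpen Ω) (hΩc : IsConnected Ω)
    (f : ℂ × (Fin k → ℂ) → ℂ)
    (hf : AnalyticOnNhd ℂ f ((D \ {0}) ×ˢ Ω))
    (hext : ∃ V : Set (Fin k → ℂ), V ⊆ Ω ∧ V.Nonempty ∧ IsOpen V ∧
      ∃ F₀ : ℂ × (Fin k → ℂ) → ℂ, AnalyticOnNhd ℂ F₀ (D ×ˢ V) ∧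
        ∀ p ∈ (D \ {0}) ×ˢ V, F₀ p = f p) :
    ∃ F : ℂ × (Fin k → ℂ) → ℂ, AnalyticOnNhd ℂ F (D ×ˢ Ω) ∧
      ∀ p ∈ (D \ {0}) ×ˢ Ω, F p = f p := by
  obtain ⟨V, hVΩ, ⟨v, hv⟩, hVo, F₀, hF₀, hF₀f⟩ := hext
  have hD₀ : D ∈ 𝓝 (0 : ℂ) := by
    rw [hD]
    exact (isOpen_lt (by fun_prop) continuous_const).mem_nhds (by simpa using hR)
  refine stmt_10_general hD₀ hΩo hΩc.isPreconnected hf (hVΩ hv) ?_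
  filter_upwards [hVo.mem_nhds hv] with w hw
  exact isBoundedUnder_norm_of_continuousAt_of_eqOn hD₀
    (hF₀ (0, w) ⟨mem_of_mem_nhds hD₀, hw⟩).along_fst.continuousAt fun z hz => hF₀f (z, w) ⟨hz, hw⟩
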